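/- arXiv:0901.4747 — 3 statements merged into one kernel-verified Lean document; each statement's English description precedes it below -/
import Mathlib

section
/- Let K be a field, let A be an n×n matrix over K, and let P be a monic irreducible polynomial over K. Let e be the multiplicity of P in the minimal polynomial of A and let m be the multiplicity of P in the characteristic polynomial of A. Then the nullity of the matrix P(A)^e equals m·deg(P), i.e., the dimension of the kernel of (the linear map given by) the e-th power of the evaluation of P at A is m times the degree of P. -/
open Polynomial

/-- Every irreducible factor of the characteristic polynomial of a matrix divides each polynomial
annihilating that matrix. -/
theorem Matrix.dvd_of_irreducible_of_dvd_charpoly_of_aeval_eq_zero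
    {K ι : Type*} [Field K] [Fintype ι] [DecidableEq ι] (A : Matrix ι ι K)
    {P Q : K[X]} (hP : Irreducible P) (hdvd : P ∣ A.charpoly) (hQ : aeval A Q = 0) : P ∣ Q := by
  have := Fact.mk hP
  let B := A.map (algebraMap K (AdjoinRoot P))
  have hroot : B.charpoly.IsRoot (AdjoinRoot.root P) := by
    rw [Matrix.charpoly_map, IsRoot, eval_map_algebraMap, AdjoinRoot.aeval_eq,
      AdjoinRoot.mk_eq_zero]
    exact hdvd
  have hspec := Matrix.mem_spectrum_of_isRoot_charpoly hroot
  have hne : Nonempty ι := by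
    by_contra h
    rw [not_nonempty_iff] at h
    exact hP.not_isUnit (isUnit_of_dvd_one (by simpa using hdvd))
  have hB : aeval B (Q.map (algebraMap K (AdjoinRoot P))) = 0 := by
    rw [aeval_map_algebraMap]
    have h := aeval_algHom_apply (Algebra.ofId K (AdjoinRoot P)).mapMatrix A Q
    rw [hQ, map_zero] at h
    exact h
  have hmem := spectrum.subset_polynomial_aeval B (Q.map (algebraMap K (AdjoinRoot P)))
    ⟨_, hspec, rfl⟩
  rw [hB, spectrum.zero_eq, Set.mem_singleton_iff] at hmem
  beta_reduce at hmem
  rwa [eval_map_algebraMap, AdjoinRoot.aeval_eq, AdjoinRoot.mk_eq_zero] at hmem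

namespace LinearMap

variable {K V : Type*} [Field K] [AddCommGroup V] [Module K V]

/-- Every irreducible factor of the characteristic polynomial of an endomorphism divides each
polynomial annihilating that endomorphism. -/
theorem dvd_of_irreducible_of_dvd_charpoly_of_aeval_eq_zero [FiniteDimensional K V]
    (f : Module.End K V) {P Q : K[X]} (hP : Irreducible P) (hdvd : P ∣ f.charpoly)
    (hQ : aeval f Q = 0) : P ∣ Q := by
  let b := Module.finBasis K V
  refine (toMatrix b b f).dvd_of_irreducible_of_dvd_charpoly_of_aeval_eq_zero hP
    (by rwa [charpoly_toMatrix]) ?_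
  have h := aeval_algHom_apply (toMatrixAlgEquiv b).toAlgHom f Q
  rw [hQ, map_zero] at h
  exact h

theorem coe_aeval_restrict_apply (f : Module.End K V) {W : Submodule K V}
    (hW : ∀ x ∈ W, f x ∈ W) (Q : K[X]) (x : W) :
    (aeval (f.restrict hW) Q x : V) = aeval f Q x := by
  induction Q using Polynomial.induction_on generalizing x with
  | C a => simp
  | add p q hp hq => simp [hp, hq]
  | monomial n a h =>
    rw [pow_succ, ← mul_assoc, map_mul (aeval (f.restrict hW)) _ X, map_mul (aeval f) _ X,
      aeval_X, aeval_X, Module.End.mul_apply, Module.End.mul_apply, h, coe_restrict_apply]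

theorem apply_mem_ker_aeval (f : Module.End K V) (Q : K[X]) :
    ∀ x ∈ ker (aeval f Q), f x ∈ ker (aeval f Q) := by
  intro x hx
  rw [mem_ker] at hx ⊢
  have h : aeval f Q * f = f * aeval f Q := by
    simpa using congrArg (aeval f) (mul_comm Q X)
  rw [← Module.End.mul_apply, h, Module.End.mul_apply, hx, map_zero]

theorem aeval_restrict_ker_aeval (f : Module.End K V) (Q : K[X]) :
    aeval (f.restrict (f.apply_mem_ker_aeval Q)) Q = 0 := by
  ext x
  rw [coe_aeval_restrict_apply]
  exact x.2

/-- The characteristic polynomial is multiplicative over a decomposition into complementary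
invariant subspaces. -/
theorem charpoly_eq_mul_of_isCompl [FiniteDimensional K V] (f : Module.End K V)
    {U W : Submodule K V} (h : IsCompl U W) (hU : ∀ x ∈ U, f x ∈ U) (hW : ∀ x ∈ W, f x ∈ W) :
    f.charpoly = (f.restrict hU).charpoly * (f.restrict hW).charpoly := by
  rw [← charpoly_prodMap, ← (Submodule.prodEquivOfIsCompl U W h).charpoly_conj]
  congr 1
  ext x
  obtain ⟨y, rfl⟩ := (Submodule.prodEquivOfIsCompl U W h).surjective x
  simp [LinearEquiv.conj_apply]

/-- If `P ^ e * Q` annihilates `f`, with `P` an irreducible polynomial not dividing `Q`, then the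
dimension of the kernel of `P(f) ^ e` is the multiplicity of `P` in the characteristic polynomial
times the degree of `P`. -/
theorem finrank_ker_aeval_pow [FiniteDimensional K V] (f : Module.End K V) {P Q C : K[X]}
    (hP : Irreducible P) {e m : ℕ} (hQ : ¬ P ∣ Q) (hf : aeval f (P ^ e * Q) = 0)
    (hC : ¬ P ∣ C) (hchar : f.charpoly = P ^ m * C) :
    Module.finrank K (ker (aeval f (P ^ e))) = m * P.natDegree := by
  have hcop : IsCoprime (P ^ e) Q := (hP.coprime_iff_not_dvd.mpr hQ).pow_left
  have hcompl : IsCompl (ker (aeval f (P ^ e))) (ker (aeval f Q)) := by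
    refine ⟨disjoint_ker_aeval_of_isCoprime f hcop, codisjoint_iff.mpr ?_⟩
    rw [sup_ker_aeval_eq_ker_aeval_mul_of_coprime f hcop, hf, ker_zero]
  have hmul := f.charpoly_eq_mul_of_isCompl hcompl (f.apply_mem_ker_aeval _)
    (f.apply_mem_ker_aeval _)
  have hU := f.aeval_restrict_ker_aeval (P ^ e)
  have hW := f.aeval_restrict_ker_aeval Q
  set g := f.restrict (f.apply_mem_ker_aeval (P ^ e))
  set h := f.restrict (f.apply_mem_ker_aeval Q)
  have hg0 : g.charpoly ≠ 0 := g.charpoly_monic.ne_zero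
  obtain ⟨D, hgD, hD⟩ :=
    (FiniteMultiplicity.of_prime_left hP.prime hg0).exists_eq_pow_mul_and_not_dvd
  set a := multiplicity P g.charpoly
  have hDunit : IsUnit D := by
    by_contra hD'
    have hD0 : D ≠ 0 := by rintro rfl; exact hD (dvd_zero P)
    obtain ⟨R, hR, hRD⟩ := WfDvdMonoid.exists_irreducible_factor hD' hD0
    have hRP : R ∣ P := hR.prime.dvd_of_dvd_pow
      (g.dvd_of_irreducible_of_dvd_charpoly_of_aeval_eq_zero hR
        (hgD ▸ hRD.mul_left _) hU)
    exact hD (((hR.associated_of_dvd hP hRP).dvd_iff_dvd_left).mp hRD)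
  have hh : ¬ P ∣ h.charpoly := fun hdvd =>
    hQ (h.dvd_of_irreducible_of_dvd_charpoly_of_aeval_eq_zero hP hdvd hW)
  have ham : a = m := by
    rw [hchar, hgD, mul_assoc] at hmul
    have hDh : ¬ P ∣ D * h.charpoly := fun hdvd => (hP.prime.dvd_or_dvd hdvd).elim hD hh
    have h₁ := multiplicity_eq_of_dvd_of_not_dvd (dvd_mul_right (P ^ m) C)
      (by rwa [pow_succ, mul_dvd_mul_iff_left (pow_ne_zero _ hP.ne_zero)])
    have h₂ := multiplicity_eq_of_dvd_of_not_dvd (dvd_mul_right (P ^ a) (D * h.charpoly))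
      (by rwa [pow_succ, mul_dvd_mul_iff_left (pow_ne_zero _ hP.ne_zero)])
    rw [← h₁, hmul, h₂]
  rw [← g.charpoly_natDegree, hgD, natDegree_mul (pow_ne_zero _ hP.ne_zero) hDunit.ne_zero,
    natDegree_eq_zero_of_isUnit hDunit, natDegree_pow, add_zero, ham]

end LinearMap

/-- The nullity method: if `e` is the multiplicity of the monic irreducible
polynomial `P` in the minimal polynomial of `A`, and `m` its multiplicity in the
characteristic polynomial of `A`, then the nullity of `P(A)^e` is `m * deg P`. -/
theorem nullity_aeval_pow_eq_mul_natDegree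
    {K : Type*} [Field K] {n : ℕ} (A : Matrix (Fin n) (Fin n) K)
    (P : Polynomial K) (hPmonic : P.Monic) (hPirr : Irreducible P)
    (e m : ℕ)
    (heDvd : P ^ e ∣ minpoly K A) (heNotDvd : ¬ P ^ (e + 1) ∣ minpoly K A)
    (hmDvd : P ^ m ∣ A.charpoly) (hmNotDvd : ¬ P ^ (m + 1) ∣ A.charpoly) :
    Module.finrank K
        (LinearMap.ker ((Polynomial.aeval A P ^ e).mulVecLin)) =
      m * P.natDegree := by
  obtain ⟨Q, hQ⟩ := heDvd
  obtain ⟨C, hC⟩ := hmDvd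
  have hP0 : P ≠ 0 := hPirr.ne_zero
  rw [hQ, pow_succ, mul_dvd_mul_iff_left (pow_ne_zero _ hP0)] at heNotDvd
  rw [hC, pow_succ, mul_dvd_mul_iff_left (pow_ne_zero _ hP0)] at hmNotDvd
  have haeval (R : K[X]) : aeval (Matrix.toLin' A) R = (aeval A R).mulVecLin :=
    aeval_algHom_apply (Matrix.toLinAlgEquiv' : Matrix (Fin n) (Fin n) K ≃ₐ[K] _).toAlgHom A R
  rw [← map_pow, ← haeval]
  refine LinearMap.finrank_ker_aeval_pow (Matrix.toLin' A) hPirr heNotDvd ?_ hmNotDvd ?_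
  · rw [← hQ, haeval, minpoly.aeval, Matrix.mulVecLin_zero]
  · rw [← hC, ← LinearMap.charpoly_toMatrix (Matrix.toLin' A) (Pi.basisFun K (Fin n)),
      LinearMap.toMatrix_eq_toMatrix', LinearMap.toMatrix'_toLin']
end

section
/- Let K be a finite field, let P be a monic irreducible polynomial over K of degree d, and let e ≥ 1 be an integer. Let A be a square matrix of size e·d over K whose minimal polynomial and characteristic polynomial both equal P^e (for instance the block Jordan matrix J_{P^e}, or the companion matrix of P^e). Then for every integer k ≥ 0, the nullity of P(A)^k equals min(k, e)·d. -/
open Polynomial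

section NullityPow

variable {K V : Type*} [Field K] [AddCommGroup V] [Module K V]

/-- If `P(f) ^ (m + 1)` kills `v` but `P(f) ^ m` does not, with `P` irreducible, then
`P ^ (m + 1)` generates the annihilator of `v` in `K[X]`. -/
theorem pow_succ_dvd_of_aeval_apply_eq_zero {P : K[X]} (hP : Irreducible P) {f : Module.End K V}
    {m : ℕ} {v : V} (hzero : aeval f (P ^ (m + 1)) v = 0) (hne : aeval f (P ^ m) v ≠ 0)
    {g : K[X]} (hg : aeval f g v = 0) : P ^ (m + 1) ∣ g := by
  classical
  obtain ⟨i, hi, hassoc⟩ := (dvd_prime_pow hP.prime (m + 1)).1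
    (EuclideanDomain.gcd_dvd_right g (P ^ (m + 1)))
  rcases hi.eq_or_lt with rfl | hlt
  · exact hassoc.symm.dvd.trans (EuclideanDomain.gcd_dvd_left _ _)
  · obtain ⟨c, hc⟩ := hassoc.dvd.trans (pow_dvd_pow P (Nat.le_of_lt_succ hlt))
    refine absurd ?_ hne
    rw [hc, EuclideanDomain.gcd_eq_gcd_ab, mul_comm _ c, mul_comm g, mul_comm (P ^ (m + 1))]
    simp only [map_mul, map_add, Module.End.mul_apply, LinearMap.add_apply, hg, hzero, map_zero,
      add_zero]

/-- If `P(f) ^ (a + b) = 0` and `P(f) ^ (a + b - 1) ≠ 0`, the rank of `P(f) ^ a` is at least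
`b * deg P`. -/
theorem mul_natDegree_le_finrank_range_aeval_pow [FiniteDimensional K V] {P : K[X]}
    (hP : Irreducible P) {f : Module.End K V} {e : ℕ} (hzero : aeval f (P ^ e) = 0)
    (hne : aeval f (P ^ (e - 1)) ≠ 0) {a b : ℕ} (hab : a + b = e) :
    b * P.natDegree ≤ Module.finrank K (LinearMap.range (aeval f (P ^ a))) := by
  obtain ⟨v, hv⟩ : ∃ v, aeval f (P ^ (e - 1)) v ≠ 0 := by
    by_contra! h
    exact hne (LinearMap.ext h)
  have he : e - 1 + 1 = e := by
    rcases e with _ | e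
    · exact absurd hzero hne
    · rfl
  let φ : degreeLT K (b * P.natDegree) →ₗ[K] LinearMap.range (aeval f (P ^ a)) :=
    (aeval f (P ^ a)).rangeRestrict ∘ₗ LinearMap.applyₗ v ∘ₗ (aeval f).toLinearMap ∘ₗ
      (degreeLT K (b * P.natDegree)).subtype
  have hφ : Function.Injective φ := by
    refine (injective_iff_map_eq_zero φ).2 fun g hg => ?_
    have hker : aeval f (P ^ a * (g : K[X])) v = 0 := by
      rw [map_mul]
      exact congrArg Subtype.val hg
    have hdvd : P ^ (e - 1 + 1) ∣ P ^ a * (g : K[X]) :=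
      pow_succ_dvd_of_aeval_apply_eq_zero hP (by rw [he, hzero, LinearMap.zero_apply]) hv hker
    rw [he, ← hab, pow_add] at hdvd
    have hdvd' := (mul_dvd_mul_iff_left (pow_ne_zero a hP.ne_zero)).1 hdvd
    refine Subtype.ext (eq_zero_of_dvd_of_degree_lt hdvd' ?_)
    rw [degree_eq_natDegree (pow_ne_zero b hP.ne_zero), natDegree_pow]
    exact mem_degreeLT.1 g.2
  calc b * P.natDegree = Module.finrank K (degreeLT K (b * P.natDegree)) := by
        rw [(degreeLTEquiv K _).finrank_eq, Module.finrank_fin_fun]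
    _ ≤ _ := LinearMap.finrank_le_finrank_of_injective hφ

/-- If `P(f) ^ e = 0` and `P(f) ^ (e - 1) ≠ 0` on a space of dimension `e * deg P`, the nullity of
`P(f) ^ k` is `k * deg P` for `k ≤ e`. -/
theorem finrank_ker_aeval_pow_of_le [FiniteDimensional K V] {P : K[X]}
    (hP : Irreducible P) {f : Module.End K V} {e : ℕ} (hzero : aeval f (P ^ e) = 0)
    (hne : aeval f (P ^ (e - 1)) ≠ 0) (hV : Module.finrank K V = e * P.natDegree)
    {k : ℕ} (hk : k ≤ e) :
    Module.finrank K (LinearMap.ker (aeval f (P ^ k))) = k * P.natDegree := by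
  obtain ⟨j, rfl⟩ := Nat.exists_eq_add_of_le hk
  have hrange := mul_natDegree_le_finrank_range_aeval_pow hP hzero hne rfl
  have hrange' := mul_natDegree_le_finrank_range_aeval_pow hP hzero hne (Nat.add_comm j k)
  have hle : LinearMap.range (aeval f (P ^ j)) ≤ LinearMap.ker (aeval f (P ^ k)) := by
    rw [LinearMap.range_le_ker_iff, ← Module.End.mul_eq_comp, ← map_mul, ← pow_add, hzero]
  have hle' := Submodule.finrank_mono hle
  have hsum := (aeval f (P ^ k)).finrank_range_add_finrank_ker
  rw [hV, add_mul] at hsum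
  lia

end NullityPow

/-- If `A` is a square matrix of size `e * d` over a finite field whose minimal
and characteristic polynomials both equal `P ^ e`, for `P` monic irreducible of
degree `d` and `e ≥ 1`, then for every `k ≥ 0` the nullity of `P(A)^k` equals
`min k e * d`. -/
theorem nullity_aeval_pow_of_minpoly_eq_charpoly_eq_pow
    {K : Type*} [Field K] [Fintype K]
    (P : Polynomial K) (hPmonic : P.Monic) (hPirr : Irreducible P)
    (d : ℕ) (hd : P.natDegree = d) (e : ℕ) (he : 1 ≤ e)
    (A : Matrix (Fin (e * d)) (Fin (e * d)) K)
    (hmin : minpoly K A = P ^ e) (hchar : A.charpoly = P ^ e) :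
    ∀ k : ℕ,
      Module.finrank K
          (LinearMap.ker ((Polynomial.aeval A P ^ k).mulVecLin)) =
        min k e * d := by
  intro k
  subst hd
  have hzero : aeval A (P ^ e) = 0 := hmin ▸ minpoly.aeval K A
  have hne : aeval A (P ^ (e - 1)) ≠ 0 := fun h => by
    have hdvd := minpoly.dvd K A h
    rw [hmin, pow_dvd_pow_iff hPirr.ne_zero hPirr.not_isUnit] at hdvd
    lia
  have hlin (g : K[X]) : aeval (Matrix.toLinAlgEquiv' A) g = (aeval A g).mulVecLin :=
    aeval_algHom_apply Matrix.toLinAlgEquiv'.toAlgHom A g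
  have hker {i : ℕ} (hi : i ≤ e) := finrank_ker_aeval_pow_of_le (f := Matrix.toLinAlgEquiv' A) hPirr
    (by rw [hlin, hzero, Matrix.mulVecLin_zero])
    (by
      rw [hlin, ← Matrix.mulVecLin_zero]
      exact fun h => hne (Matrix.toLin'.injective h))
    (Module.finrank_fin_fun K) hi
  rcases le_total k e with hk | hk
  · rw [min_eq_left hk, ← map_pow, ← hlin, hker hk]
  · rw [min_eq_right hk, ← map_pow,
      aeval_eq_zero_of_dvd_aeval_eq_zero (pow_dvd_pow P hk) hzero, ← hzero, ← hlin, hker le_rfl]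
end

section
/- Let K be a finite field, let P be a monic irreducible polynomial over K of degree d, and let A be a block diagonal matrix whose diagonal blocks B_1, …, B_r are square matrices over K such that the minimal polynomial and the characteristic polynomial of B_l both equal P^{k_l} for positive integers k_1, …, k_r. Then for every integer j ≥ 0, the nullity of P(A)^j equals d · Σ_{l=1}^{r} min(j, k_l). In particular, writing n_k for the number of indices l with k_l = k and e = max_l k_l, the nullity ν_j of P(A)^j satisfies ν_j = d·(Σ_{k=1}^{j} k·n_k + Σ_{k=j+1}^{e} j·n_k). -/
open Polynomial in
/-- If `minpoly K f = P ^ k` with `P` irreducible, some vector has annihilator exactly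
`P ^ k`. -/
theorem exists_forall_aeval_apply_eq_zero_iff_of_minpoly_eq_pow
    {K V : Type*} [Field K] [AddCommGroup V] [Module K V]
    {P : K[X]} (hP : Irreducible P) {f : Module.End K V} {k : ℕ} (hk : 1 ≤ k)
    (hmin : minpoly K f = P ^ k) :
    ∃ v : V, ∀ q : K[X], aeval f q v = 0 ↔ P ^ k ∣ q := by
  classical
  have hne : aeval f (P ^ (k - 1)) ≠ 0 := by
    intro h
    have hdvd := minpoly.dvd K f h
    rw [hmin, pow_dvd_pow_iff hP.ne_zero hP.not_isUnit] at hdvd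
    omega
  obtain ⟨v, hv⟩ : ∃ v, aeval f (P ^ (k - 1)) v ≠ 0 := by
    by_contra! h
    exact hne (LinearMap.ext h)
  have hzero : aeval f (P ^ k) v = 0 := by rw [← hmin, minpoly.aeval, LinearMap.zero_apply]
  have hmul : ∀ a b : K[X], aeval f b v = 0 → aeval f (a * b) v = 0 := fun a b h => by
    rw [map_mul, Module.End.mul_apply, h, map_zero]
  refine ⟨v, fun q => ⟨fun hq => ?_, ?_⟩⟩
  · have hgcd : aeval f (EuclideanDomain.gcd q (P ^ k)) v = 0 := by
      rw [EuclideanDomain.gcd_eq_gcd_ab, map_add, LinearMap.add_apply, mul_comm q,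
        mul_comm (P ^ k), hmul _ _ hq, hmul _ _ hzero, add_zero]
    obtain ⟨m, hm, hassoc⟩ :=
      (dvd_prime_pow hP.prime k).1 (EuclideanDomain.gcd_dvd_right q (P ^ k))
    obtain rfl | hlt := hm.eq_or_lt
    · exact hassoc.symm.dvd.trans (EuclideanDomain.gcd_dvd_left _ _)
    · obtain ⟨c, hc⟩ := hassoc.dvd.trans (pow_dvd_pow P (Nat.le_sub_one_of_lt hlt))
      exact absurd (by rw [hc, mul_comm]; exact hmul _ _ hgcd) hv
  · rintro ⟨c, rfl⟩
    rw [mul_comm]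
    exact hmul _ _ hzero

open Polynomial in
/-- If `minpoly K f = P ^ k` with `P` irreducible, then `P(f) ^ i` has rank at least
`deg P * (k - i)`. -/
theorem natDegree_mul_le_finrank_range_aeval_pow
    {K V : Type*} [Field K] [AddCommGroup V] [Module K V] [FiniteDimensional K V]
    {P : K[X]} (hP : Irreducible P) {f : Module.End K V} {k : ℕ} (hk : 1 ≤ k)
    (hmin : minpoly K f = P ^ k) {i : ℕ} (hi : i ≤ k) :
    P.natDegree * (k - i) ≤ Module.finrank K (LinearMap.range (aeval f P ^ i)) := by
  obtain ⟨v, hv⟩ := exists_forall_aeval_apply_eq_zero_iff_of_minpoly_eq_pow hP hk hmin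
  let φ : degreeLT K (P.natDegree * (k - i)) →ₗ[K] LinearMap.range (aeval f P ^ i) :=
    (((aeval f P ^ i) ∘ₗ LinearMap.applyₗ v ∘ₗ (aeval f).toLinearMap).codRestrict _
      (fun q => LinearMap.mem_range_self _ _)) ∘ₗ (degreeLT K _).subtype
  have hφ : Function.Injective φ := by
    rw [injective_iff_map_eq_zero]
    rintro ⟨q, hq⟩ h
    have h' : aeval f (P ^ i * q) v = 0 := by
      rw [map_mul, map_pow]
      exact congrArg Subtype.val h
    rw [hv, ← Nat.add_sub_cancel' hi, pow_add,
      mul_dvd_mul_iff_left (pow_ne_zero _ hP.ne_zero)] at h'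
    refine Subtype.ext (eq_zero_of_dvd_of_degree_lt h' ?_)
    have hdeg : (P ^ (k - i)).degree = ↑(P.natDegree * (k - i)) := by
      rw [degree_eq_natDegree (pow_ne_zero _ hP.ne_zero), natDegree_pow, mul_comm]
    exact hdeg ▸ mem_degreeLT.1 hq
  have hfin := LinearMap.finrank_le_finrank_of_injective hφ
  rwa [(degreeLTEquiv K _).finrank_eq, Module.finrank_fin_fun] at hfin

open Polynomial in
/-- The nullity of `P(f) ^ j` for an endomorphism `f` whose minimal polynomial is `P ^ k` and
which acts on a space of dimension `deg P * k`. -/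
theorem finrank_ker_aeval_pow_of_minpoly_eq_pow
    {K V : Type*} [Field K] [AddCommGroup V] [Module K V] [FiniteDimensional K V]
    {P : K[X]} (hP : Irreducible P) {f : Module.End K V} {k : ℕ} (hk : 1 ≤ k)
    (hmin : minpoly K f = P ^ k) (hV : Module.finrank K V = P.natDegree * k) (j : ℕ) :
    Module.finrank K (LinearMap.ker (aeval f P ^ j)) = P.natDegree * min j k := by
  have hzero : aeval f P ^ k = 0 := by rw [← map_pow, ← hmin, minpoly.aeval]
  obtain hkj | hjk := le_total k j
  · rw [pow_eq_zero_of_le hkj hzero, LinearMap.ker_zero, finrank_top, hV, min_eq_right hkj]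
  · have hrange := natDegree_mul_le_finrank_range_aeval_pow hP hk hmin hjk
    have hsum := LinearMap.finrank_range_add_finrank_ker (aeval f P ^ j)
    have hker : LinearMap.range (aeval f P ^ (k - j)) ≤ LinearMap.ker (aeval f P ^ j) := by
      rw [LinearMap.range_le_ker_iff, ← Module.End.mul_eq_comp, ← pow_add,
        Nat.add_sub_cancel' hjk, hzero]
    have hlower := (natDegree_mul_le_finrank_range_aeval_pow hP hk hmin
      (Nat.sub_le k j)).trans (Submodule.finrank_mono hker)
    rw [Nat.sub_sub_self hjk] at hlower
    have hsplit : P.natDegree * k = P.natDegree * (k - j) + P.natDegree * j := by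
      rw [← mul_add, Nat.sub_add_cancel hjk]
    rw [min_eq_left hjk]
    omega

namespace Matrix

open Polynomial in
theorem finrank_ker_mulVecLin_aeval_pow
    {K n : Type*} [Field K] [Fintype n] [DecidableEq n]
    {P : K[X]} (hP : Irreducible P) {B : Matrix n n K} {k : ℕ} (hk : 1 ≤ k)
    (hmin : minpoly K B = P ^ k) (hchar : B.charpoly = P ^ k) (j : ℕ) :
    Module.finrank K (LinearMap.ker (aeval B P ^ j).mulVecLin) = P.natDegree * min j k := by
  have hmap : (aeval B P ^ j).mulVecLin = aeval (toLinAlgEquiv' B) P ^ j := by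
    rw [← AlgEquiv.coe_toAlgHom, aeval_algHom_apply,
      ← map_pow (AlgEquiv.toAlgHom toLinAlgEquiv')]
    rfl
  rw [hmap]
  refine finrank_ker_aeval_pow_of_minpoly_eq_pow hP hk ?_ ?_ j
  · rw [minpoly.algEquiv_eq, hmin]
  · rw [Module.finrank_fintype_fun_eq_card, ← B.charpoly_natDegree_eq_dim, hchar, natDegree_pow,
      mul_comm]

theorem blockDiagonal'_mulVec_apply {o R : Type*} {m n : o → Type*} [Fintype o] [DecidableEq o]
    [∀ l, Fintype (n l)] [NonUnitalNonAssocSemiring R]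
    (M : ∀ l, Matrix (m l) (n l) R) (v : (Σ l, n l) → R) (l : o) (a : m l) :
    (blockDiagonal' M *ᵥ v) ⟨l, a⟩ = (M l *ᵥ fun b => v ⟨l, b⟩) a := by
  simp only [mulVec, dotProduct, Fintype.sum_sigma]
  rw [Finset.sum_eq_single l]
  · simp
  · intro l' _ hne
    exact Finset.sum_eq_zero fun b _ => by rw [blockDiagonal'_apply_ne _ _ _ hne.symm, zero_mul]
  · simp

theorem finrank_ker_mulVecLin_blockDiagonal' {o K : Type*} {m n : o → Type*} [Fintype o]
    [DecidableEq o] [∀ l, Fintype (n l)] [Field K] (M : ∀ l, Matrix (m l) (n l) K) :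
    Module.finrank K (LinearMap.ker (blockDiagonal' M).mulVecLin) =
      ∑ l, Module.finrank K (LinearMap.ker (M l).mulVecLin) := by
  rw [← Module.finrank_pi_fintype K]
  refine LinearEquiv.finrank_eq
    { toFun := fun v l => ⟨fun b => v.1 ⟨l, b⟩, ?_⟩
      invFun := fun w => ⟨fun b => (w b.1).1 b.2, ?_⟩
      map_add' := fun _ _ => rfl
      map_smul' := fun _ _ => rfl
      left_inv := fun _ => rfl
      right_inv := fun _ => rfl }
  · rw [LinearMap.mem_ker, mulVecLin_apply]
    ext a
    rw [← blockDiagonal'_mulVec_apply]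
    exact congrFun v.2 ⟨l, a⟩
  · rw [LinearMap.mem_ker, mulVecLin_apply]
    ext ⟨l, a⟩
    rw [blockDiagonal'_mulVec_apply]
    exact congrFun (w l).2 a

open Polynomial in
theorem aeval_blockDiagonal' {o R : Type*} {m : o → Type*} [Fintype o] [DecidableEq o]
    [∀ l, Fintype (m l)] [∀ l, DecidableEq (m l)] [CommRing R]
    (M : ∀ l, Matrix (m l) (m l) R) (p : R[X]) :
    aeval (blockDiagonal' M) p = blockDiagonal' fun l => aeval (M l) p := by
  induction p using Polynomial.induction_on' with
  | add p q hp hq =>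
    simp only [map_add, hp, hq]
    exact (blockDiagonal'_add _ _).symm
  | monomial i a =>
    simp only [aeval_monomial, ← Algebra.smul_def, ← blockDiagonal'_pow]
    exact (blockDiagonal'_smul _ _).symm

end Matrix

theorem Finset.sum_min_eq_sum_mul_card_fiber {ι : Type*} (s : Finset ι) (κ : ι → ℕ) (j : ℕ) :
    ∑ l ∈ s, min j (κ l) =
      (∑ k ∈ Finset.Icc 1 j, k * (s.filter fun l => κ l = k).card) +
        ∑ k ∈ Finset.Icc (j + 1) (s.sup κ), j * (s.filter fun l => κ l = k).card := by
  simp only [Finset.card_filter, Finset.mul_sum, mul_ite, mul_one, mul_zero]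
  rw [Finset.sum_comm, Finset.sum_comm (s := Finset.Icc (j + 1) _), ← Finset.sum_add_distrib]
  refine Finset.sum_congr rfl fun l hl => ?_
  have hle : κ l ≤ s.sup κ := Finset.le_sup hl
  simp only [Finset.sum_ite_eq, Finset.mem_Icc]
  split_ifs <;> omega


/-- Let `A` be block diagonal with blocks `B l` whose minimal and characteristic
polynomials both equal `P ^ kk l`, for `P` monic irreducible of degree `d` over a
finite field. Then the nullity of `P(A)^j` equals `d * Σ_l min j (kk l)`;
in particular, writing `n_k` for the number of blocks with `kk l = k` and
`e = max_l kk l`, it equals `d * (Σ_{k=1}^{j} k n_k + Σ_{k=j+1}^{e} j n_k)`. -/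
theorem nullity_aeval_pow_blockDiagonal'
    {K : Type*} [Field K] [Fintype K]
    (P : Polynomial K) (hPmonic : P.Monic) (hPirr : Irreducible P)
    (d : ℕ) (hd : P.natDegree = d)
    (r : ℕ) {sz : Fin r → ℕ} (B : ∀ l, Matrix (Fin (sz l)) (Fin (sz l)) K)
    (kk : Fin r → ℕ) (hk : ∀ l, 1 ≤ kk l)
    (hmin : ∀ l, minpoly K (B l) = P ^ kk l)
    (hchar : ∀ l, (B l).charpoly = P ^ kk l) :
    ∀ j : ℕ,
      Module.finrank K
          (LinearMap.ker
            ((Polynomial.aeval (Matrix.blockDiagonal' B) P ^ j).mulVecLin)) =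
        d * ∑ l, min j (kk l) ∧
      Module.finrank K
          (LinearMap.ker
            ((Polynomial.aeval (Matrix.blockDiagonal' B) P ^ j).mulVecLin)) =
        d * ((∑ k ∈ Finset.Icc 1 j,
                k * (Finset.univ.filter (fun l => kk l = k)).card) +
             ∑ k ∈ Finset.Icc (j + 1) (Finset.univ.sup kk),
                j * (Finset.univ.filter (fun l => kk l = k)).card) := by
  intro j
  subst hd
  rw [← Finset.sum_min_eq_sum_mul_card_fiber, and_self, Matrix.aeval_blockDiagonal',
    ← Matrix.blockDiagonal'_pow, Matrix.finrank_ker_mulVecLin_blockDiagonal', Finset.mul_sum]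
  exact Finset.sum_congr rfl fun l _ =>
    Matrix.finrank_ker_mulVecLin_aeval_pow hPirr (hk l) (hmin l) (hchar l) j
end
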